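/- Let n ≥ 1, let ρ, σ be n×n complex density matrices (Hermitian, positive semidefinite, trace 1), let S be the swap operator on ℂⁿ⊗ℂⁿ, and let 0 < Δt ≤ 1. Then, in the ℓ²→ℓ² operator norm, ‖ Tr₁[exp(−i Δt S)(ρ⊗σ)exp(i Δt S)] − exp(−i Δt ρ) σ exp(i Δt ρ) ‖ ≤ 6·Δt². In particular, one step of the swap-based density matrix exponentiation protocol approximates conjugation by exp(−i Δt ρ) to second order in Δt. -/

import Mathlib

open Matrix
open scoped Kronecker Matrix.Norms.L2Operator ComplexOrder

/-- The swap operator `S` on `ℂⁿ ⊗ ℂⁿ`, with entries `S[(i,j),(k,l)] = δ_{i,l} δ_{j,k}`. -/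
noncomputable def swapOp (n : ℕ) : Matrix (Fin n × Fin n) (Fin n × Fin n) ℂ :=
  Matrix.of fun p q => if p.1 = q.2 ∧ p.2 = q.1 then 1 else 0

/-- Partial trace over the first tensor factor:
`(Tr₁ M)[j,l] = Σ_i M[(i,j),(i,l)]`. -/
noncomputable def ptrace1 {n : ℕ} (M : Matrix (Fin n × Fin n) (Fin n × Fin n) ℂ) :
    Matrix (Fin n) (Fin n) ℂ :=
  Matrix.of fun j l => ∑ i : Fin n, M (i, j) (i, l)

/-!
Since `S² = 1`, `exp(±itS) = cos t ± i sin t S`, and the partial trace can be computed exactly: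
`Tr₁[exp(-itS)(ρ⊗σ)exp(itS)] = cos² t σ + sin² t ρ - i sin t cos t [ρ, σ]`.
On the other side, conjugation by the unitary group `exp(itρ)` is isometric, so Taylor's formula
gives `exp(-itρ) σ exp(itρ) = σ - it [ρ, σ] + R` with `‖R‖ ≤ ‖[ρ, [ρ, σ]]‖ t² / 2`. The difference
is `sin² t (ρ - σ) + i (t - sin t cos t) [ρ, σ] - R`, and `|t - sin t cos t| ≤ t²` because the
derivative of `t - sin t cos t` is `2 sin² t`. If `‖ρ‖, ‖σ‖ ≤ 1`, each of the three terms is at most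
`2t²`, which is where the constant `6` comes from.
-/

open NormedSpace (exp)
open Complex (I)

section Calculus

variable {E : Type*} [NormedAddCommGroup E] [NormedSpace ℝ E] {f f' : ℝ → E} {C : ℝ}

theorem norm_sub_le_of_norm_deriv_le_mul_of_nonneg (hf : ∀ u, HasDerivAt f (f' u) u)
    (hf' : ∀ u, 0 ≤ u → ‖f' u‖ ≤ C * u) {t : ℝ} (ht : 0 ≤ t) :
    ‖f t - f 0‖ ≤ C * (t ^ 2 / 2) := by
  refine image_norm_le_of_norm_deriv_right_le_deriv_boundary
    (f := fun u ↦ f u - f 0) (B := fun u ↦ C * (u ^ 2 / 2))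
    (fun u _ ↦ ((hf u).sub_const _).continuousAt.continuousWithinAt)
    (fun u _ ↦ ((hf u).sub_const _).hasDerivWithinAt) (by simp) (fun u ↦ ?_)
    (fun u hu ↦ hf' u hu.1) ⟨ht, le_rfl⟩
  simpa using (((hasDerivAt_id u).pow 2).div_const 2).const_mul C

theorem norm_sub_le_of_norm_deriv_le_mul_abs (hf : ∀ u, HasDerivAt f (f' u) u)
    (hf' : ∀ u, ‖f' u‖ ≤ C * |u|) (t : ℝ) :
    ‖f t - f 0‖ ≤ C * (t ^ 2 / 2) := by
  rcases le_total 0 t with ht | ht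
  · exact norm_sub_le_of_norm_deriv_le_mul_of_nonneg hf
      (fun u hu ↦ by simpa [abs_of_nonneg hu] using hf' u) ht
  · have hderiv (u : ℝ) : HasDerivAt (fun v ↦ f (-v)) (-f' (-u)) u := by
      simpa [Function.comp_def] using (hf (-u)).scomp u (hasDerivAt_neg u)
    simpa using norm_sub_le_of_norm_deriv_le_mul_of_nonneg hderiv
      (fun u hu ↦ by simpa [abs_of_nonneg hu] using hf' (-u)) (neg_nonneg.mpr ht)

theorem abs_self_sub_sin_mul_cos_le (t : ℝ) : |t - Real.sin t * Real.cos t| ≤ t ^ 2 := by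
  have hderiv (u : ℝ) :
      HasDerivAt (fun v ↦ v - Real.sin v * Real.cos v) (2 * Real.sin u ^ 2) u := by
    refine ((hasDerivAt_id u).sub
      ((Real.hasDerivAt_sin u).mul (Real.hasDerivAt_cos u))).congr_deriv ?_
    linear_combination -Real.sin_sq_add_cos_sq u
  have hbound (u : ℝ) : ‖2 * Real.sin u ^ 2‖ ≤ 2 * |u| := by
    rw [Real.norm_of_nonneg (by positivity), ← sq_abs]
    nlinarith [Real.abs_sin_le_one u, Real.abs_sin_le_abs (x := u), abs_nonneg (Real.sin u)]
  simpa [mul_div_cancel₀] using norm_sub_le_of_norm_deriv_le_mul_abs hderiv hbound t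

end Calculus

theorem norm_lie_le_two_mul {A : Type*} [NonUnitalSeminormedRing A] (a b : A) :
    ‖⁅a, b⁆‖ ≤ 2 * ‖a‖ * ‖b‖ :=
  calc
    ‖⁅a, b⁆‖ ≤ ‖a * b‖ + ‖b * a‖ := norm_sub_le _ _
    _ ≤ ‖a‖ * ‖b‖ + ‖b‖ * ‖a‖ := add_le_add (norm_mul_le a b) (norm_mul_le b a)
    _ = 2 * ‖a‖ * ‖b‖ := by ring

theorem real_smul_I_smul {E : Type*} [AddCommGroup E] [Module ℂ E] (t : ℝ) (x : E) :
    t • I • x = (I * (t : ℂ)) • x := by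
  rw [mul_comm, mul_smul, Complex.coe_smul]

section ExpConj

variable {A : Type*} [NormedRing A] [NormedAlgebra ℝ A]

/-- The conjugation `e^{-tx} b e^{tx}`. For `x = iρ` this is the Schrödinger evolution of the state
`b` under the Hamiltonian `ρ` for time `t`. -/
noncomputable def expConj (x : A) (t : ℝ) (b : A) : A :=
  exp (-t • x) * b * exp (t • x)

@[simp]
theorem expConj_zero (x b : A) : expConj x 0 b = b := by
  simp [expConj]

theorem expConj_I_smul {B : Type*} [NormedRing B] [NormedAlgebra ℂ B] (a b : B) (t : ℝ) :
    expConj (I • a) t b =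
      exp ((-(I * (t : ℂ))) • a) * b * exp ((I * (t : ℂ)) • a) := by
  rw [expConj, real_smul_I_smul, real_smul_I_smul, Complex.ofReal_neg, mul_neg]

variable [CompleteSpace A]

theorem hasDerivAt_expConj (x b : A) (t : ℝ) :
    HasDerivAt (fun u ↦ expConj x u b) (expConj x t ⁅b, x⁆) t := by
  have hleft : HasDerivAt (fun u : ℝ ↦ exp (-u • x)) (-(exp (-t • x) * x)) t := by
    simpa [Function.comp_def] using (hasDerivAt_exp_smul_const x (-t)).scomp t (hasDerivAt_neg t)
  refine ((hleft.mul_const b).mul (hasDerivAt_exp_smul_const' x t)).congr_deriv ?_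
  rw [expConj, Ring.lie_def]
  noncomm_ring

variable [StarRing A] [CStarRing A] [StarModule ℝ A] {x : A}

theorem exp_smul_mem_unitary (hx : x ∈ skewAdjoint A) (t : ℝ) : exp (t • x) ∈ unitary A := by
  let _ : NormedAlgebra ℚ A := .restrictScalars ℚ ℝ A
  exact NormedSpace.exp_mem_unitary_of_mem_skewAdjoint (skewAdjoint.smul_mem t hx)

theorem norm_expConj (hx : x ∈ skewAdjoint A) (t : ℝ) (b : A) : ‖expConj x t b‖ = ‖b‖ := by
  rw [expConj, CStarRing.norm_mul_mem_unitary _ (exp_smul_mem_unitary hx t),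
    CStarRing.norm_mem_unitary_mul _ (exp_smul_mem_unitary hx (-t))]

theorem norm_expConj_sub_le (hx : x ∈ skewAdjoint A) (b : A) (t : ℝ) :
    ‖expConj x t b - b‖ ≤ ‖⁅b, x⁆‖ * |t| := by
  simpa using convex_univ.norm_image_sub_le_of_norm_hasDerivWithin_le
    (fun u _ ↦ (hasDerivAt_expConj x b u).hasDerivWithinAt)
    (fun u _ ↦ (norm_expConj hx u ⁅b, x⁆).le) (Set.mem_univ 0) (Set.mem_univ t)

theorem norm_expConj_sub_sub_smul_lie_le (hx : x ∈ skewAdjoint A) (b : A) (t : ℝ) :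
    ‖expConj x t b - b - t • ⁅b, x⁆‖ ≤ ‖⁅⁅b, x⁆, x⁆‖ * (t ^ 2 / 2) := by
  have hderiv (u : ℝ) :
      HasDerivAt (fun v ↦ expConj x v b - v • ⁅b, x⁆) (expConj x u ⁅b, x⁆ - ⁅b, x⁆) u := by
    simpa using! (hasDerivAt_expConj x b u).sub ((hasDerivAt_id u).smul_const ⁅b, x⁆)
  simpa [sub_right_comm] using norm_sub_le_of_norm_deriv_le_mul_abs hderiv
    (norm_expConj_sub_le hx ⁅b, x⁆) t

end ExpConj

theorem norm_exp_I_mul_smul_conj_sub_add_le {A : Type*} [CStarAlgebra A] {a : A}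
    (ha : IsSelfAdjoint a) (b : A) (t : ℝ) :
    ‖exp ((-(I * (t : ℂ))) • a) * b * exp ((I * (t : ℂ)) • a) - b
        + (I * (t : ℂ)) • ⁅a, b⁆‖ ≤ ‖⁅a, ⁅a, b⁆⁆‖ * (t ^ 2 / 2) := by
  have hIa : I • a ∈ skewAdjoint A := ha.smul_mem_skewAdjoint Complex.conj_I
  have lie_I_smul : ⁅b, I • a⁆ = -(I • ⁅a, b⁆) := by
    simp [Ring.lie_def, smul_sub]
  have lie_lie_I_smul : ⁅⁅b, I • a⁆, I • a⁆ = -⁅a, ⁅a, b⁆⁆ := by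
    simp only [Ring.lie_def, mul_smul_comm, smul_mul_assoc, sub_mul, mul_sub, smul_sub,
      smul_smul, Complex.I_mul_I, neg_one_smul, mul_assoc]
    abel
  have taylor := norm_expConj_sub_sub_smul_lie_le hIa b t
  rwa [lie_lie_I_smul, lie_I_smul, norm_neg, smul_neg, sub_neg_eq_add, expConj_I_smul,
    real_smul_I_smul] at taylor

theorem exp_I_mul_smul_of_mul_self_eq_one {A : Type*} [NormedRing A] [NormedAlgebra ℂ A] {s : A}
    (hs : s * s = 1) (t : ℝ) :
    exp ((I * (t : ℂ)) • s) =
      (Real.cos t : ℂ) • (1 : A) + (I * (Real.sin t : ℂ)) • s := by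
  have hIs : (I • s) * (I • s) = -1 := by
    rw [smul_mul_smul_comm, hs, Complex.I_mul_I, neg_one_smul]
  let φ : ℂ →ₐ[ℝ] A := Complex.liftAux (I • s) hIs
  have hφ : Continuous φ := φ.toLinearMap.continuous_of_finiteDimensional
  let _ : Algebra ℚ A := Algebra.compHom A (algebraMap ℚ ℂ)
  calc
    exp ((I * (t : ℂ)) • s) = exp (φ (t * I)) := by
      simp [φ, Complex.liftAux_apply, real_smul_I_smul]
    _ = φ (Complex.exp (t * I)) := by
      rw [Complex.exp_eq_exp_ℂ, NormedSpace.map_exp φ hφ]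
    _ = (Real.cos t : ℂ) • (1 : A) + (I * (Real.sin t : ℂ)) • s := by
      rw [Complex.liftAux_apply, Complex.exp_ofReal_mul_I_re, Complex.exp_ofReal_mul_I_im,
        real_smul_I_smul, Algebra.algebraMap_eq_smul_one, Complex.coe_smul]

section PosSemidef

variable {m : Type*} [Fintype m] [DecidableEq m] {A : Matrix m m ℂ}

theorem eigenvalues_le_re_trace_of_posSemidef (hA : A.PosSemidef) (i : m) :
    hA.isHermitian.eigenvalues i ≤ A.trace.re := by
  rw [hA.isHermitian.trace_eq_sum_eigenvalues]
  simpa using Finset.single_le_sum (fun j _ ↦ hA.eigenvalues_nonneg j) (Finset.mem_univ i)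

open scoped MatrixOrder in
theorem norm_le_re_trace_of_posSemidef (hA : A.PosSemidef) : ‖A‖ ≤ A.trace.re := by
  have htr : 0 ≤ A.trace.re := (Complex.nonneg_iff.mp hA.trace_nonneg).1
  rw [CStarAlgebra.norm_le_iff_le_algebraMap A htr hA.nonneg]
  refine le_algebraMap_of_spectrum_le (fun x hx ↦ ?_) hA.isHermitian
  rw [hA.isHermitian.spectrum_real_eq_range_eigenvalues] at hx
  obtain ⟨i, rfl⟩ := hx
  exact eigenvalues_le_re_trace_of_posSemidef hA i

theorem norm_le_one_of_posSemidef_of_trace_eq_one (hA : A.PosSemidef) (hAtr : A.trace = 1) :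
    ‖A‖ ≤ 1 := by
  simpa [hAtr] using norm_le_re_trace_of_posSemidef hA

end PosSemidef

section Swap

variable {n : ℕ}

theorem swapOp_eq_permMatrix :
    swapOp n = Equiv.Perm.permMatrix ℂ (Equiv.prodComm (Fin n) (Fin n)) := by
  ext p q
  simp [swapOp, PEquiv.toMatrix_apply, Prod.ext_iff, eq_comm, and_comm]

theorem swapOp_mul (M : Matrix (Fin n × Fin n) (Fin n × Fin n) ℂ) :
    swapOp n * M = M.submatrix Prod.swap id := by
  rw [swapOp_eq_permMatrix]
  exact PEquiv.toMatrix_toPEquiv_mul _ _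

theorem mul_swapOp (M : Matrix (Fin n × Fin n) (Fin n × Fin n) ℂ) :
    M * swapOp n = M.submatrix id Prod.swap := by
  rw [swapOp_eq_permMatrix]
  exact PEquiv.mul_toMatrix_toPEquiv _ _

theorem swapOp_mul_self : swapOp n * swapOp n = 1 := by
  rw [swapOp_eq_permMatrix, ← Matrix.permMatrix_mul]
  exact Matrix.permMatrix_refl

theorem swapOp_mul_kronecker_mul_swapOp (A B : Matrix (Fin n) (Fin n) ℂ) :
    swapOp n * (A ⊗ₖ B) * swapOp n = B ⊗ₖ A := by
  rw [swapOp_mul, mul_swapOp]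
  ext p q
  simp [mul_comm]

theorem ptrace1_add (M N : Matrix (Fin n × Fin n) (Fin n × Fin n) ℂ) :
    ptrace1 (M + N) = ptrace1 M + ptrace1 N := by
  ext j l
  simp [ptrace1, Finset.sum_add_distrib]

theorem ptrace1_smul (c : ℂ) (M : Matrix (Fin n × Fin n) (Fin n × Fin n) ℂ) :
    ptrace1 (c • M) = c • ptrace1 M := by
  ext j l
  simp [ptrace1, Finset.mul_sum]

theorem ptrace1_kronecker (A B : Matrix (Fin n) (Fin n) ℂ) :
    ptrace1 (A ⊗ₖ B) = A.trace • B := by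
  ext j l
  simp [ptrace1, Matrix.trace, Finset.sum_mul]

theorem ptrace1_swapOp_mul_kronecker (A B : Matrix (Fin n) (Fin n) ℂ) :
    ptrace1 (swapOp n * (A ⊗ₖ B)) = A * B := by
  rw [swapOp_mul]
  ext j l
  simp [ptrace1, Matrix.mul_apply]

theorem ptrace1_kronecker_mul_swapOp (A B : Matrix (Fin n) (Fin n) ℂ) :
    ptrace1 ((A ⊗ₖ B) * swapOp n) = B * A := by
  rw [mul_swapOp]
  ext j l
  simp [ptrace1, Matrix.mul_apply, mul_comm]

theorem exp_I_mul_smul_swapOp (t : ℝ) :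
    exp ((I * (t : ℂ)) • swapOp n) =
      (Real.cos t : ℂ) • 1 + (I * (Real.sin t : ℂ)) • swapOp n :=
  exp_I_mul_smul_of_mul_self_eq_one swapOp_mul_self t

theorem exp_neg_I_mul_smul_swapOp (t : ℝ) :
    exp ((-(I * (t : ℂ))) • swapOp n) =
      (Real.cos t : ℂ) • 1 + (-(I * (Real.sin t : ℂ))) • swapOp n := by
  simpa using exp_I_mul_smul_swapOp (n := n) (-t)

theorem ptrace1_smul_one_add_smul_swapOp_mul_kronecker_mul (A B : Matrix (Fin n) (Fin n) ℂ)
    (a b c d : ℂ) :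
    ptrace1 ((a • 1 + b • swapOp n) * (A ⊗ₖ B) * (c • 1 + d • swapOp n)) =
      (a * c * A.trace) • B + (b * d * B.trace) • A + (b * c) • (A * B) + (a * d) • (B * A) := by
  have expand : (a • 1 + b • swapOp n) * (A ⊗ₖ B) * (c • 1 + d • swapOp n) =
      (a * c) • (A ⊗ₖ B) + (b * d) • (swapOp n * (A ⊗ₖ B) * swapOp n) +
        (b * c) • (swapOp n * (A ⊗ₖ B)) + (a * d) • ((A ⊗ₖ B) * swapOp n) := by
    simp only [add_mul, mul_add, smul_mul_assoc, mul_smul_comm, one_mul, mul_one]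
    module
  simp only [expand, swapOp_mul_kronecker_mul_swapOp, ptrace1_add, ptrace1_smul,
    ptrace1_kronecker, ptrace1_swapOp_mul_kronecker, ptrace1_kronecker_mul_swapOp, smul_smul]

theorem ptrace1_exp_swapOp_conj (ρ σ : Matrix (Fin n) (Fin n) ℂ) (t : ℝ) :
    ptrace1 (exp ((-(I * (t : ℂ))) • swapOp n) * (ρ ⊗ₖ σ) *
        exp ((I * (t : ℂ)) • swapOp n)) =
      ((Real.cos t : ℂ) ^ 2 * ρ.trace) • σ + ((Real.sin t : ℂ) ^ 2 * σ.trace) • ρ -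
        (I * (Real.sin t * Real.cos t : ℝ)) • ⁅ρ, σ⁆ := by
  rw [exp_I_mul_smul_swapOp, exp_neg_I_mul_smul_swapOp,
    ptrace1_smul_one_add_smul_swapOp_mul_kronecker_mul, Ring.lie_def]
  have neg_I_mul_mul_I_mul (s : ℂ) : -(I * s) * (I * s) = s ^ 2 := by
    linear_combination -s ^ 2 * Complex.I_sq
  rw [neg_I_mul_mul_I_mul, Complex.ofReal_mul]
  module

variable {ρ σ : Matrix (Fin n) (Fin n) ℂ}

theorem ptrace1_exp_swapOp_conj_sub_exp_conj (hρtr : ρ.trace = 1) (hσtr : σ.trace = 1) (t : ℝ) :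
    ptrace1 (exp ((-(I * (t : ℂ))) • swapOp n) * (ρ ⊗ₖ σ) *
          exp ((I * (t : ℂ)) • swapOp n)) -
        exp ((-(I * (t : ℂ))) • ρ) * σ * exp ((I * (t : ℂ)) • ρ) =
      (Real.sin t : ℂ) ^ 2 • (ρ - σ) +
        (I * (t - Real.sin t * Real.cos t : ℝ)) • ⁅ρ, σ⁆ -
        (exp ((-(I * (t : ℂ))) • ρ) * σ * exp ((I * (t : ℂ)) • ρ) - σ
          + (I * (t : ℂ)) • ⁅ρ, σ⁆) := by
  have cos_sq : (Real.cos t : ℂ) ^ 2 = 1 - (Real.sin t : ℂ) ^ 2 := by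
    exact_mod_cast Real.cos_sq' t
  rw [ptrace1_exp_swapOp_conj, hρtr, hσtr, cos_sq, Complex.ofReal_sub]
  module

theorem norm_ptrace1_exp_swapOp_conj_sub_exp_conj_le (hρ : ρ.IsHermitian) (hρtr : ρ.trace = 1)
    (hσtr : σ.trace = 1) (t : ℝ) :
    ‖ptrace1 (exp ((-(I * (t : ℂ))) • swapOp n) * (ρ ⊗ₖ σ) *
          exp ((I * (t : ℂ)) • swapOp n)) -
        exp ((-(I * (t : ℂ))) • ρ) * σ * exp ((I * (t : ℂ)) • ρ)‖ ≤
      (‖ρ - σ‖ + ‖⁅ρ, σ⁆‖ + ‖⁅ρ, ⁅ρ, σ⁆⁆‖ / 2) * t ^ 2 := by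
  have sin_sq_term : ‖(Real.sin t : ℂ) ^ 2 • (ρ - σ)‖ ≤ t ^ 2 * ‖ρ - σ‖ := by
    rw [norm_smul, norm_pow, Complex.norm_real, Real.norm_eq_abs, sq_abs]
    gcongr ?_ * _
    exact Real.sin_sq_le_sq
  have first_order_term :
      ‖(I * (t - Real.sin t * Real.cos t : ℝ)) • ⁅ρ, σ⁆‖ ≤ t ^ 2 * ‖⁅ρ, σ⁆‖ := by
    rw [norm_smul, norm_mul, Complex.norm_I, one_mul, Complex.norm_real, Real.norm_eq_abs]
    gcongr
    exact abs_self_sub_sin_mul_cos_le t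
  have taylor_term := norm_exp_I_mul_smul_conj_sub_add_le hρ.isSelfAdjoint σ t
  rw [ptrace1_exp_swapOp_conj_sub_exp_conj hρtr hσtr]
  refine (norm_sub_le _ _).trans ?_
  linarith [norm_add_le ((Real.sin t : ℂ) ^ 2 • (ρ - σ))
    ((I * (t - Real.sin t * Real.cos t : ℝ)) • ⁅ρ, σ⁆)]

theorem ptrace1_exp_swap_conj_approx_exp_conj_general (hρ : ρ.IsHermitian) (hρ1 : ‖ρ‖ ≤ 1)
    (hρtr : ρ.trace = 1) (hσ1 : ‖σ‖ ≤ 1) (hσtr : σ.trace = 1) (t : ℝ) :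
    ‖ptrace1 (exp ((-(I * (t : ℂ))) • swapOp n) * (ρ ⊗ₖ σ) *
          exp ((I * (t : ℂ)) • swapOp n)) -
        exp ((-(I * (t : ℂ))) • ρ) * σ * exp ((I * (t : ℂ)) • ρ)‖ ≤
      6 * t ^ 2 := by
  have sub_le : ‖ρ - σ‖ ≤ 2 := (norm_sub_le ρ σ).trans (by linarith)
  have lie_le (τ : Matrix (Fin n) (Fin n) ℂ) : ‖⁅ρ, τ⁆‖ ≤ 2 * ‖τ‖ :=
    (norm_lie_le_two_mul ρ τ).trans (by gcongr; linarith)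
  refine (norm_ptrace1_exp_swapOp_conj_sub_exp_conj_le hρ hρtr hσtr t).trans ?_
  gcongr
  linarith [lie_le σ, lie_le ⁅ρ, σ⁆]

end Swap

/-- One step of the swap-based density matrix exponentiation protocol approximates
conjugation by `exp(−iΔtρ)` to second order in `Δt`:
`‖Tr₁[exp(−iΔtS)(ρ⊗σ)exp(iΔtS)] − exp(−iΔtρ) σ exp(iΔtρ)‖ ≤ 6·Δt²` in the
ℓ²→ℓ² operator norm. -/
theorem ptrace1_exp_swap_conj_approx_exp_conj {n : ℕ} (hn : 1 ≤ n)
    (ρ σ : Matrix (Fin n) (Fin n) ℂ)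
    (hρ : ρ.PosSemidef) (hρtr : ρ.trace = 1)
    (hσ : σ.PosSemidef) (hσtr : σ.trace = 1)
    (Δt : ℝ) (hΔt0 : 0 < Δt) (hΔt1 : Δt ≤ 1) :
    ‖ptrace1 (NormedSpace.exp ((-(Complex.I * (Δt : ℂ))) • swapOp n) * (ρ ⊗ₖ σ) *
          NormedSpace.exp ((Complex.I * (Δt : ℂ)) • swapOp n)) -
        NormedSpace.exp ((-(Complex.I * (Δt : ℂ))) • ρ) * σ *
          NormedSpace.exp ((Complex.I * (Δt : ℂ)) • ρ)‖ ≤ 6 * Δt ^ 2 := by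
  exact ptrace1_exp_swap_conj_approx_exp_conj_general hρ.isHermitian
    (norm_le_one_of_posSemidef_of_trace_eq_one hρ hρtr) hρtr
    (norm_le_one_of_posSemidef_of_trace_eq_one hσ hσtr) hσtr Δt
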